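/- For every ε > 0 there exists a constant C > 0 such that for all integers k ≥ 3, every equinumerous t-coloring c of [t·n] with C · k^(2+ε) ≤ t and t·n < k^4 has at most t · C(n, 2) · k^(1+ε) arithmetic progressions of length k in [t·n] that are not rainbow with respect to c, where C(n, 2) = n(n−1)/2. -/

import Mathlib

/-- `c` is an equinumerous `t`-coloring of `[t*n] = {1, ..., t*n}`:
each color class `c⁻¹(i)` for `i ∈ {1, ..., t}` has exactly `n` elements. -/
def EquinumerousColoring (t n : ℕ) (c : ℕ → ℕ) : Prop :=
  ∀ i, 1 ≤ i → i ≤ t → ((Finset.Icc 1 (t * n)).filter (fun x => c x = i)).card = n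

/-- The arithmetic progression with first term `a`, common difference `d` and
length `k` is rainbow with respect to the coloring `c`. -/
def RainbowAP (k : ℕ) (c : ℕ → ℕ) (a d : ℕ) : Prop :=
  ∀ i < k, ∀ j < k, c (a + i * d) = c (a + j * d) → i = j

/-- The set of arithmetic progressions of length `k` contained in `[m]` that
are not rainbow with respect to `c`, encoded as pairs `(a, d)`. -/
def NonRainbowAPSet (m k : ℕ) (c : ℕ → ℕ) : Set (ℕ × ℕ) :=
  {p | 1 ≤ p.1 ∧ 1 ≤ p.2 ∧ p.1 + (k - 1) * p.2 ≤ m ∧ ¬ RainbowAP k c p.1 p.2}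

/-!
A progression that is not rainbow has two terms `x < y` of the same color. Its difference divides
`y - x`, and it is determined by `x`, the position of `x` and its difference, so at most
`k * τ(y - x)` progressions arise from a given pair, where `τ` counts divisors, and there are
`t * C(n, 2)` monochromatic pairs. Since `y - x < k ^ 4`, the bound `τ(m) = O(m ^ δ)` for every
`δ > 0` gives `τ(y - x) ≤ k ^ ε` for large `k`, and `C * k ^ (2 + ε) ≤ t < k ^ 4` forces
`k` to be large.
-/

open Filter Finset

section Divisors

lemma add_one_le_max_one_inv_mul_pow {x : ℝ} (hx : 1 < x) (v : ℕ) :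
    (v : ℝ) + 1 ≤ max 1 (x - 1)⁻¹ * x ^ v := by
  have hx' : 0 < x - 1 := sub_pos.2 hx
  have bernoulli : 1 + v * (x - 1) ≤ x ^ v := by
    simpa using one_add_mul_le_pow (a := x - 1) (by linarith) v
  have one_le : 1 ≤ max 1 (x - 1)⁻¹ * (x - 1) := by
    calc (1 : ℝ) = (x - 1)⁻¹ * (x - 1) := (inv_mul_cancel₀ hx'.ne').symm
      _ ≤ max 1 (x - 1)⁻¹ * (x - 1) := by gcongr; exact le_max_right _ _
  calc (v : ℝ) + 1 ≤ v * (max 1 (x - 1)⁻¹ * (x - 1)) + max 1 (x - 1)⁻¹ :=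
        add_le_add (le_mul_of_one_le_right v.cast_nonneg one_le) (le_max_left _ _)
    _ = max 1 (x - 1)⁻¹ * (1 + v * (x - 1)) := by ring
    _ ≤ max 1 (x - 1)⁻¹ * x ^ v := by gcongr

lemma natCast_rpow_eq_prod_primeFactors {m : ℕ} (hm : m ≠ 0) (δ : ℝ) :
    (m : ℝ) ^ δ = ∏ p ∈ m.primeFactors, ((p : ℝ) ^ δ) ^ m.factorization p := by
  calc (m : ℝ) ^ δ = (∏ p ∈ m.primeFactors, (p : ℝ) ^ m.factorization p) ^ δ := by
        congr 1
        exact_mod_cast (Nat.prod_factorization_pow_eq_self hm).symm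
    _ = ∏ p ∈ m.primeFactors, ((p : ℝ) ^ m.factorization p) ^ δ :=
        (Real.finsetProd_rpow _ _ (fun _ _ => by positivity) δ).symm
    _ = ∏ p ∈ m.primeFactors, ((p : ℝ) ^ δ) ^ m.factorization p :=
        prod_congr rfl fun p _ => (Real.rpow_pow_comm p.cast_nonneg δ _).symm

lemma prod_le_pow_of_le_one_of_le {f : ℕ → ℝ} {B : ℝ} {N : ℕ} {s : Finset ℕ} (hB : 1 ≤ B)
    (hf₀ : ∀ p ∈ s, 0 ≤ f p) (hfB : ∀ p ∈ s, f p ≤ B) (hf₁ : ∀ p ∈ s, N ≤ p → f p ≤ 1) :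
    ∏ p ∈ s, f p ≤ B ^ N := by
  calc ∏ p ∈ s, f p ≤ ∏ p ∈ s, if p < N then B else 1 := by
        refine prod_le_prod hf₀ fun p hp => ?_
        split_ifs with h
        exacts [hfB p hp, hf₁ p hp (not_lt.1 h)]
    _ = B ^ #{p ∈ s | p < N} := by rw [← prod_filter, prod_const]
    _ ≤ B ^ N := by
        refine pow_le_pow_right₀ hB ?_
        calc #{p ∈ s | p < N} ≤ #(range N) :=
              card_le_card fun p hp => mem_range.2 (mem_filter.1 hp).2
          _ = N := card_range N

theorem exists_card_divisors_le_mul_rpow {δ : ℝ} (hδ : 0 < δ) :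
    ∃ K : ℝ, ∀ m : ℕ, (#m.divisors : ℝ) ≤ K * (m : ℝ) ^ δ := by
  obtain ⟨N, hN⟩ : ∃ N : ℕ, ∀ p ≥ N, (2 : ℝ) ≤ (p : ℝ) ^ δ := eventually_atTop.1 <|
    ((tendsto_rpow_atTop hδ).comp tendsto_natCast_atTop_atTop).eventually_ge_atTop 2
  have one_lt_two_rpow : (1 : ℝ) < 2 ^ δ := Real.one_lt_rpow one_lt_two hδ
  refine ⟨max 1 ((2 : ℝ) ^ δ - 1)⁻¹ ^ N, fun m => ?_⟩
  rcases eq_or_ne m 0 with rfl | hm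
  · simp [Real.zero_rpow hδ.ne']
  have two_rpow_le : ∀ p ∈ m.primeFactors, (2 : ℝ) ^ δ ≤ (p : ℝ) ^ δ := fun p hp => by
    gcongr
    exact_mod_cast (Nat.prime_of_mem_primeFactors hp).two_le
  calc (#m.divisors : ℝ) = ∏ p ∈ m.primeFactors, ((m.factorization p : ℝ) + 1) := by
        rw [Nat.card_divisors hm]
        push_cast
        rfl
    _ ≤ ∏ p ∈ m.primeFactors,
          max 1 ((p : ℝ) ^ δ - 1)⁻¹ * ((p : ℝ) ^ δ) ^ m.factorization p :=
        prod_le_prod (fun _ _ => by positivity) fun p hp =>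
          add_one_le_max_one_inv_mul_pow (one_lt_two_rpow.trans_le (two_rpow_le p hp)) _
    _ = (∏ p ∈ m.primeFactors, max 1 ((p : ℝ) ^ δ - 1)⁻¹) * (m : ℝ) ^ δ := by
        rw [prod_mul_distrib, natCast_rpow_eq_prod_primeFactors hm]
    _ ≤ max 1 ((2 : ℝ) ^ δ - 1)⁻¹ ^ N * (m : ℝ) ^ δ := by
        gcongr
        refine prod_le_pow_of_le_one_of_le (le_max_left _ _) (fun _ _ => by positivity)
          (fun p hp => ?_) (fun p _ hNp => ?_)
        · have := two_rpow_le p hp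
          gcongr
        · exact max_le le_rfl (inv_le_one_of_one_le₀ (by linarith [hN p hNp]))

theorem eventually_card_divisors_le_rpow {ε : ℝ} (hε : 0 < ε) (A : ℕ) :
    ∀ᶠ x : ℝ in atTop, ∀ m : ℕ, (m : ℝ) ≤ x ^ A → (#m.divisors : ℝ) ≤ x ^ ε := by
  have hδ : 0 < ε / (2 * (A + 1)) := by positivity
  obtain ⟨K, hK⟩ := exists_card_divisors_le_mul_rpow hδ
  filter_upwards [(tendsto_rpow_atTop (half_pos hε)).eventually_ge_atTop K,
    eventually_ge_atTop 1] with x hKx hx m hm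
  have hx₀ : 0 < x := by linarith
  have exponent_le : A * (ε / (2 * (A + 1))) ≤ ε / 2 := by
    field_simp
    linarith
  calc (#m.divisors : ℝ) ≤ K * (m : ℝ) ^ (ε / (2 * (A + 1))) := hK m
    _ ≤ x ^ (ε / 2) * (x ^ A) ^ (ε / (2 * (A + 1))) := by gcongr
    _ = x ^ (ε / 2) * x ^ (A * (ε / (2 * (A + 1)))) := by
        rw [Real.rpow_mul hx₀.le, Real.rpow_natCast]
    _ ≤ x ^ (ε / 2) * x ^ (ε / 2) := by gcongr
    _ = x ^ ε := by rw [← Real.rpow_add hx₀, add_halves]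

end Divisors

section MonochromaticPairs

variable {ι κ : Type*} [LinearOrder ι] [DecidableEq κ]

/-- The two-element subsets of `s` on which the coloring `c` is constant, encoded as pairs `(x, y)`
with `x < y`. -/
def monochromaticPairs (s : Finset ι) (c : ι → κ) : Finset (ι × ι) :=
  {p ∈ s ×ˢ s | p.1 < p.2 ∧ c p.1 = c p.2}

lemma mem_monochromaticPairs {s : Finset ι} {c : ι → κ} {p : ι × ι} :
    p ∈ monochromaticPairs s c ↔ (p.1 ∈ s ∧ p.2 ∈ s) ∧ p.1 < p.2 ∧ c p.1 = c p.2 := by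
  rw [monochromaticPairs, mem_filter, mem_product]

lemma card_monochromaticPairs_eq_sum {s : Finset ι} {c : ι → κ} {T : Finset κ}
    (hc : ∀ x ∈ s, c x ∈ T) :
    #(monochromaticPairs s c) = ∑ i ∈ T, (#{x ∈ s | c x = i}).choose 2 := by
  rw [card_eq_sum_card_fiberwise (f := fun p => c p.1) (t := T)
    fun p hp => hc _ (mem_monochromaticPairs.1 hp).1.1]
  refine sum_congr rfl fun i _ => ?_
  rw [← card_product_filter_lt]
  congr 1
  ext p
  simp only [mem_filter, mem_monochromaticPairs, mem_product]
  grind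

end MonochromaticPairs

namespace EquinumerousColoring

variable {t n : ℕ} {c : ℕ → ℕ}

lemma color_mem_Icc (hc : EquinumerousColoring t n c) : ∀ x ∈ Icc 1 (t * n), c x ∈ Icc 1 t := by
  refine card_filter_eq_iff.1 ?_
  calc #{x ∈ Icc 1 (t * n) | c x ∈ Icc 1 t}
      = ∑ i ∈ Icc 1 t, #{x ∈ Icc 1 (t * n) | c x = i} :=
        (sum_card_fiberwise_eq_card_filter _ _ c).symm
    _ = ∑ _ ∈ Icc 1 t, n :=
        sum_congr rfl fun i hi => hc i (mem_Icc.1 hi).1 (mem_Icc.1 hi).2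
    _ = #(Icc 1 (t * n)) := by simp

lemma card_monochromaticPairs (hc : EquinumerousColoring t n c) :
    #(monochromaticPairs (Icc 1 (t * n)) c) = t * n.choose 2 := by
  calc #(monochromaticPairs (Icc 1 (t * n)) c)
      = ∑ i ∈ Icc 1 t, (#{x ∈ Icc 1 (t * n) | c x = i}).choose 2 :=
        card_monochromaticPairs_eq_sum hc.color_mem_Icc
    _ = ∑ _ ∈ Icc 1 t, n.choose 2 := sum_congr rfl fun i hi => by
        rw [hc i (mem_Icc.1 hi).1 (mem_Icc.1 hi).2]
    _ = t * n.choose 2 := by simp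

end EquinumerousColoring

section NonRainbow

variable {m k a d : ℕ} {c : ℕ → ℕ}

lemma not_rainbowAP_iff :
    ¬ RainbowAP k c a d ↔ ∃ i j, i < j ∧ j < k ∧ c (a + i * d) = c (a + j * d) := by
  simp only [RainbowAP, not_forall]
  constructor
  · rintro ⟨i, hi, j, hj, hcol, hne⟩
    rcases lt_or_gt_of_ne hne with hij | hji
    exacts [⟨i, j, hij, hj, hcol⟩, ⟨j, i, hji, hi, hcol.symm⟩]
  · rintro ⟨i, j, hij, hj, hcol⟩
    exact ⟨i, hij.trans hj, j, hj, hcol, hij.ne⟩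

lemma exists_monochromaticPairs_of_mem_nonRainbowAPSet (h : (a, d) ∈ NonRainbowAPSet m k c) :
    ∃ p ∈ monochromaticPairs (Icc 1 m) c, ∃ i < k, a + i * d = p.1 ∧ d ∣ p.2 - p.1 := by
  obtain ⟨ha, hd, hm, hnot⟩ := h
  obtain ⟨i, j, hij, hj, hcol⟩ := not_rainbowAP_iff.1 hnot
  have term_mem : ∀ l < k, a + l * d ∈ Icc 1 m := fun l hl =>
    mem_Icc.2 ⟨ha.trans (Nat.le_add_right a _),
      le_trans (by gcongr; exact Nat.le_sub_one_of_lt hl) hm⟩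
  have term_lt : a + i * d < a + j * d := by gcongr
  refine ⟨(a + i * d, a + j * d), mem_monochromaticPairs.2
    ⟨⟨term_mem i (hij.trans hj), term_mem j hj⟩, term_lt, hcol⟩, i, hij.trans hj, rfl, ?_⟩
  rw [Nat.add_sub_add_left, ← Nat.sub_mul]
  exact Nat.dvd_mul_left d (j - i)

theorem ncard_nonRainbowAPSet_le_sum (m k : ℕ) (c : ℕ → ℕ) :
    (NonRainbowAPSet m k c).ncard ≤
      ∑ p ∈ monochromaticPairs (Icc 1 m) c, k * #(p.2 - p.1).divisors := by
  let T : Finset (Σ _ : ℕ × ℕ, ℕ × ℕ) :=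
    (monochromaticPairs (Icc 1 m) c).sigma fun p => range k ×ˢ (p.2 - p.1).divisors
  let toAP : (Σ _ : ℕ × ℕ, ℕ × ℕ) → ℕ × ℕ := fun q => (q.1.1 - q.2.1 * q.2.2, q.2.2)
  have subset_image : NonRainbowAPSet m k c ⊆ (T.image toAP : Finset (ℕ × ℕ)) := by
    rintro ⟨a, d⟩ had
    obtain ⟨p, hp, i, hi, hx, hdvd⟩ := exists_monochromaticPairs_of_mem_nonRainbowAPSet had
    have hne : p.2 - p.1 ≠ 0 := (Nat.sub_pos_of_lt (mem_monochromaticPairs.1 hp).2.1).ne'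
    refine mem_coe.2 <| mem_image.2 ⟨⟨p, i, d⟩, mem_sigma.2
      ⟨hp, mem_product.2 ⟨mem_range.2 hi, Nat.mem_divisors.2 ⟨hdvd, hne⟩⟩⟩, ?_⟩
    simp only [toAP, ← hx, Nat.add_sub_cancel]
  calc (NonRainbowAPSet m k c).ncard ≤ #(T.image toAP) := by
        rw [← Set.ncard_coe_finset]
        exact Set.ncard_le_ncard subset_image (finite_toSet _)
    _ ≤ #T := card_image_le
    _ = ∑ p ∈ monochromaticPairs (Icc 1 m) c, k * #(p.2 - p.1).divisors := by
        simp only [T, card_sigma, card_product, card_range]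

theorem ncard_nonRainbowAPSet_le_card_mul {D : ℝ} (hD : ∀ e ≤ m, (#e.divisors : ℝ) ≤ D) :
    ((NonRainbowAPSet m k c).ncard : ℝ) ≤ #(monochromaticPairs (Icc 1 m) c) * (k * D) := by
  calc ((NonRainbowAPSet m k c).ncard : ℝ)
      ≤ ∑ p ∈ monochromaticPairs (Icc 1 m) c, (k : ℝ) * #(p.2 - p.1).divisors := by
        exact_mod_cast ncard_nonRainbowAPSet_le_sum m k c
    _ ≤ ∑ _ ∈ monochromaticPairs (Icc 1 m) c, k * D := by
        refine sum_le_sum fun p hp => ?_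
        have hp₂ : p.2 ≤ m := (mem_Icc.1 (mem_monochromaticPairs.1 hp).1.2).2
        gcongr
        exact hD _ ((Nat.sub_le _ _).trans hp₂)
    _ = #(monochromaticPairs (Icc 1 m) c) * (k * D) := by rw [sum_const, nsmul_eq_mul]

end NonRainbow

theorem card_nonrainbow_small_n_general {ε : ℝ} (hε : 0 < ε) (A : ℕ) :
    ∀ᶠ k : ℕ in atTop, ∀ t n : ℕ, t * n ≤ k ^ A →
      ∀ c : ℕ → ℕ, EquinumerousColoring t n c →
        ((NonRainbowAPSet (t * n) k c).ncard : ℝ) ≤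
          (t : ℝ) * (n.choose 2 : ℝ) * (k : ℝ) ^ ((1 : ℝ) + ε) := by
  filter_upwards [tendsto_natCast_atTop_atTop.eventually (eventually_card_divisors_le_rpow hε A)]
    with k hdiv t n htn c hc
  have divisors_le : ∀ e ≤ t * n, (#e.divisors : ℝ) ≤ (k : ℝ) ^ ε := fun e he =>
    hdiv e (by exact_mod_cast he.trans htn)
  calc ((NonRainbowAPSet (t * n) k c).ncard : ℝ)
      ≤ #(monochromaticPairs (Icc 1 (t * n)) c) * (k * (k : ℝ) ^ ε) :=
        ncard_nonRainbowAPSet_le_card_mul divisors_le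
    _ = (t : ℝ) * (n.choose 2 : ℝ) * (k : ℝ) ^ ((1 : ℝ) + ε) := by
        rw [hc.card_monochromaticPairs, Real.rpow_one_add' k.cast_nonneg (by positivity)]
        push_cast
        rfl

lemma lt_of_sq_mul_rpow_le {B ε : ℝ} {k t n : ℕ} (hε : 0 ≤ ε) (hn : 0 < n)
    (ht : B ^ 2 * (k : ℝ) ^ ((2 : ℝ) + ε) ≤ t) (htn : t * n < k ^ 4) : B < k := by
  have hk : 1 ≤ (k : ℝ) := by
    exact_mod_cast Nat.one_le_iff_ne_zero.2 (by rintro rfl; simp at htn)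
  have t_lt : (t : ℝ) < (k : ℝ) ^ 4 := by
    exact_mod_cast (Nat.le_mul_of_pos_right t hn).trans_lt htn
  by_contra! hkB
  have : (k : ℝ) ^ 4 ≤ t := by
    calc (k : ℝ) ^ 4 = (k : ℝ) ^ 2 * (k : ℝ) ^ (2 : ℝ) := by
          rw [Real.rpow_two]
          ring
      _ ≤ B ^ 2 * (k : ℝ) ^ ((2 : ℝ) + ε) := by
          gcongr
          linarith
      _ ≤ t := ht
  linarith

/-- For every `ε > 0` there is a constant `C > 0` such that for all `k ≥ 3`,
every equinumerous `t`-coloring `c` of `[t*n]` with `C * k^(2+ε) ≤ t` and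
`t*n < k^4` has at most `t * C(n,2) * k^(1+ε)` non-rainbow length-`k`
arithmetic progressions in `[t*n]`. -/
theorem card_nonrainbow_small_n (ε : ℝ) (hε : 0 < ε) :
    ∃ C : ℝ, 0 < C ∧ ∀ k : ℕ, 3 ≤ k → ∀ t n : ℕ, 0 < n →
      C * (k : ℝ) ^ ((2 : ℝ) + ε) ≤ (t : ℝ) → t * n < k ^ 4 →
        ∀ c : ℕ → ℕ, EquinumerousColoring t n c →
          ((NonRainbowAPSet (t * n) k c).ncard : ℝ) ≤
            (t : ℝ) * (n.choose 2 : ℝ) * (k : ℝ) ^ ((1 : ℝ) + ε) := by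
  obtain ⟨N, hN, h⟩ := (atTop_basis' 1).eventually_iff.1 (card_nonrainbow_small_n_general hε 4)
  exact ⟨(N : ℝ) ^ 2, pow_pos (Nat.cast_pos.2 hN) 2, fun k _ t n hn ht htn =>
    h (Nat.cast_lt.1 (lt_of_sq_mul_rpow_le hε.le hn ht htn)).le t n htn.le⟩
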